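/- arXiv:2104.10625 — 8 statements merged into one kernel-verified Lean document; each statement's English description precedes it below -/
import Mathlib

section
/- Let E and R be finite sets of entities and relations, where each relation r ∈ R has a fixed arity ar(r) with 2 ≤ ar(r) ≤ N, and let S be a finite set of facts, each fact being a tuple (r, e_1, ..., e_n) with r ∈ R, n = ar(r), and e_1, ..., e_n ∈ E. Then there exist a number of segments M, a segment dimension q, entity embeddings e ↦ 𝐞 ∈ ℝ^{Mq} (a single embedding per entity shared across all argument positions and all arities), relation embeddings r ↦ 𝐫 ∈ ℝ^{Mq}, and for each arity n with 2 ≤ n ≤ N a sparse core tensor Z^n (every block of Z^n belonging to {−I_1^n, I_0^n, I_1^n}), such that for every candidate fact s = (r, e_1, ..., e_n) of every arity n, the S2S score f_z(𝐫, 𝐞_1, ..., 𝐞_n; Z^n) computed on the first min(n, M) segments of the embeddings equals 1 if s ∈ S and equals 0 if s ∉ S. -/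
open Finset

/-- The `j`-th segment (of length `q`) of a vector in `ℝ^(M·q)`:
coordinates `(j-1)q+1` through `jq` (1-based), i.e. `j·q, …, j·q + q - 1` (0-based). -/
def seg (M q : ℕ) (v : Fin (M * q) → ℝ) (j : Fin M) : Fin q → ℝ :=
  fun k => v (finProdFinEquiv (j, k))

/-- Multilinear inner product of `n+1` vectors in `ℝ^q`. -/
def mip (n q : ℕ) (v : Fin (n + 1) → Fin q → ℝ) : ℝ :=
  ∑ k : Fin q, ∏ i : Fin (n + 1), v i k

/-- The `(n+1)`-order superdiagonal tensor `I_v^n` of size `q` in each mode: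
`v` when all indices coincide, `0` elsewhere. -/
def diagT (n q : ℕ) (v : ℝ) : (Fin (n + 1) → Fin q) → ℝ :=
  fun k => if ∀ i, k i = k 0 then v else 0

/-- Tucker product of an `(n+1)`-order tensor of size `q` in each mode with
vectors `u 0, …, u n ∈ ℝ^q`. -/
def tucker (n q : ℕ) (G : (Fin (n + 1) → Fin q) → ℝ)
    (u : Fin (n + 1) → Fin q → ℝ) : ℝ :=
  ∑ k : Fin (n + 1) → Fin q, G k * ∏ i : Fin (n + 1), u i (k i)

/-- S2S score of vectors `vs 0 = r, vs 1 = e_1, …, vs n = e_n ∈ ℝ^(m·q)` with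
an S2S core tensor `Z` for arity `n` with `m` segments of size `q`. -/
def s2sScore (n m q : ℕ)
    (Z : (Fin (n + 1) → Fin m) → (Fin (n + 1) → Fin q) → ℝ)
    (vs : Fin (n + 1) → Fin (m * q) → ℝ) : ℝ :=
  ∑ j : Fin (n + 1) → Fin m, tucker n q (Z j) (fun i => seg m q (vs i) (j i))

/-- S2S score computed on the first `m` segments of vectors in `ℝ^(M·q)` (`m ≤ M`). -/
def s2sScoreFirst (n m M q : ℕ) (h : m ≤ M)
    (Z : (Fin (n + 1) → Fin m) → (Fin (n + 1) → Fin q) → ℝ)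
    (vs : Fin (n + 1) → Fin (M * q) → ℝ) : ℝ :=
  ∑ j : Fin (n + 1) → Fin m,
    tucker n q (Z j) (fun i => seg M q (vs i) (Fin.castLE h (j i)))

/-- A sparse core tensor: every block lies in `{-I_1^n, I_0^n, I_1^n}`. -/
def SparseCore (n m q : ℕ)
    (Z : (Fin (n + 1) → Fin m) → (Fin (n + 1) → Fin q) → ℝ) : Prop :=
  ∀ j, Z j = diagT n q (-1) ∨ Z j = diagT n q 0 ∨ Z j = diagT n q 1

theorem tucker_diag_zero (n q : ℕ) (u : Fin (n + 1) → Fin q → ℝ) :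
    tucker n q (diagT n q 0) u = 0 := by
  simp [tucker, diagT]

theorem tucker_diag_one (n q : ℕ) (u : Fin (n + 1) → Fin q → ℝ) :
    tucker n q (diagT n q 1) u = ∑ k : Fin q, ∏ i, u i k := by
  unfold tucker diagT
  simp only [ite_mul, one_mul, zero_mul]
  rw [← Finset.sum_filter]
  symm
  refine Finset.sum_bij (fun k _ => fun _ => k) ?_ ?_ ?_ ?_
  · intro k _; simp
  · intro a _ b _ h; exact congrFun h 0
  · intro b hb
    refine ⟨b 0, Finset.mem_univ _, ?_⟩
    funext i
    exact ((Finset.mem_filter.1 hb).2 i).symm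
  · intro k _; rfl

open Classical in
noncomputable def entW {E R : Type*} (ar : R → ℕ) (S : Finset (Σ r : R, Fin (ar r) → E))
    (e : E) (j : ℕ) : Option S → ℝ
  | none => 0
  | some t => if ∃ h : j < ar t.1.1, t.1.2 ⟨j, h⟩ = e then 1 else 0

open Classical in
noncomputable def relW {E R : Type*} (ar : R → ℕ) (S : Finset (Σ r : R, Fin (ar r) → E))
    (r : R) : Option S → ℝ
  | none => 0
  | some t => if t.1.1 = r then 1 else 0

open Classical in
theorem weight_some {E R : Type*} (ar : R → ℕ) (S : Finset (Σ r : R, Fin (ar r) → E))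
    (r : R) (e : Fin (ar r) → E) (t : S) :
    relW ar S r (some t) * ∏ i : Fin (ar r), entW ar S (e i) i (some t)
      = if t.1 = ⟨r, e⟩ then 1 else 0 := by
  obtain ⟨⟨r', e'⟩, ht⟩ := t
  by_cases hr : r' = r
  · subst hr
    simp only [relW, entW, if_true, one_mul, Finset.prod_ite_zero, Finset.prod_const_one]
    congr 1
    simp only [Sigma.mk.injEq, heq_eq_eq, true_and, eq_iff_iff]
    constructor
    · intro h; funext i; obtain ⟨_, h'⟩ := h i (Finset.mem_univ _); exact h'
    · intro h i _; exact ⟨i.2, congrFun h i⟩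
  · simp [relW, hr]

open Classical in
theorem weight_sum {E R : Type*} (ar : R → ℕ) (S : Finset (Σ r : R, Fin (ar r) → E))
    (r : R) (e : Fin (ar r) → E) :
    ∑ o : Option S, relW ar S r o * ∏ i : Fin (ar r), entW ar S (e i) i o
      = if (⟨r, e⟩ : Σ r : R, Fin (ar r) → E) ∈ S then 1 else 0 := by
  rw [Fintype.sum_option]
  simp only [weight_some]
  rw [Finset.sum_coe_sort S (fun t => if t = (⟨r, e⟩ : Σ r : R, Fin (ar r) → E) then (1:ℝ) else 0)]
  simp [relW]

open Classical in
noncomputable def coreZ (n m q : ℕ) :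
    (Fin (n + 1) → Fin m) → (Fin (n + 1) → Fin q) → ℝ :=
  fun j => if ∀ i, (j i).val = i.val - 1 then diagT n q 1 else diagT n q 0

/-- expressiveness of S2S on mixed-arity data: for finite entity and
relation sets, each relation `r` having a fixed arity `ar r` with `2 ≤ ar r ≤ N`, and any
finite set `S` of facts `(r, e_1, …, e_{ar r})`, there exist a number of segments `M ≥ 1`,
a segment dimension `q ≥ 1`, a single shared embedding per entity and per relation in
`ℝ^(M·q)`, and for each arity `2 ≤ n ≤ N` a sparse core tensor `Z n` with
`min n M` segments (every block in `{-I_1^n, I_0^n, I_1^n}`), such that for every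
candidate fact the S2S score computed on the first `min(n, M)` segments of the embeddings
is `1` on facts in `S` and `0` on all other candidate facts. -/
theorem s2s_expressive_mixed_arity {E R : Type*}
    [Fintype E] [Fintype R] [DecidableEq E] [DecidableEq R]
    (N : ℕ) (ar : R → ℕ) (har : ∀ r : R, 2 ≤ ar r ∧ ar r ≤ N)
    (S : Finset (Σ r : R, Fin (ar r) → E)) :
    ∃ (M q : ℕ) (_hM : 1 ≤ M) (_hq : 1 ≤ q)
      (Eemb : E → Fin (M * q) → ℝ) (Remb : R → Fin (M * q) → ℝ)
      (Z : ∀ n : ℕ, 2 ≤ n → n ≤ N →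
        (Fin (n + 1) → Fin (min n M)) → (Fin (n + 1) → Fin q) → ℝ),
      (∀ (n : ℕ) (h2 : 2 ≤ n) (hN : n ≤ N), SparseCore n (min n M) q (Z n h2 hN)) ∧
      ∀ (r : R) (e : Fin (ar r) → E),
        s2sScoreFirst (ar r) (min (ar r) M) M q (min_le_right _ _)
            (Z (ar r) (har r).1 (har r).2)
            (Fin.cases (Remb r) (fun i => Eemb (e i)))
          = if (⟨r, e⟩ : Σ r : R, Fin (ar r) → E) ∈ S then 1 else 0 := by
  classical
  let eqv := Fintype.equivFin (Option S)
  refine ⟨N + 1, Fintype.card (Option S), by omega, Fintype.card_pos,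
    fun e v => entW ar S e (finProdFinEquiv.symm v).1 (eqv.symm (finProdFinEquiv.symm v).2),
    fun r v => relW ar S r (eqv.symm (finProdFinEquiv.symm v).2),
    fun n _ _ => coreZ n _ _, ?_, ?_⟩
  · intro n h2 hN j
    simp only [coreZ]
    split_ifs
    · exact Or.inr (Or.inr rfl)
    · exact Or.inr (Or.inl rfl)
  · intro r e
    have h2 := (har r).1
    have hN := (har r).2
    unfold s2sScoreFirst
    have hlt : ∀ i : Fin (ar r + 1), i.val - 1 < min (ar r) (N + 1) := fun i => by
      have := i.2
      omega
    rw [Finset.sum_eq_single (fun i => ⟨i.val - 1, hlt i⟩)]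
    · simp only [coreZ]
      rw [if_pos (by simp), tucker_diag_one]
      simp only [Fin.prod_univ_succ, seg, Fin.cases_zero, Fin.cases_succ,
        Equiv.symm_apply_apply, Fin.val_castLE, Fin.val_succ, Nat.add_sub_cancel]
      rw [Equiv.sum_comp eqv.symm
        (fun o => relW ar S r o * ∏ i : Fin (ar r), entW ar S (e i) i o), weight_sum]
      congr
    · intro j _ hj
      simp only [coreZ]
      rw [if_neg, tucker_diag_zero]
      intro h
      exact hj (funext fun i => Fin.ext (h i))
    · intro h; exact absurd (Finset.mem_univ _) h
end

section
/- Fix an arity n ≥ 2. Let E and R be finite sets of entities and relations and let S be a finite set of n-ary facts, each fact being a tuple (r, e_1, ..., e_n) with r ∈ R and e_1, ..., e_n ∈ E. Then there exist a number of segments M ≥ n, a segment dimension q, entity embeddings e ↦ 𝐞 ∈ ℝ^{Mq} (a single embedding per entity shared across all n argument positions), relation embeddings r ↦ 𝐫 ∈ ℝ^{Mq}, and a sparse core tensor Z^n with m = min(n, M) = n segments (every block of Z^n belonging to {−I_1^n, I_0^n, I_1^n}) such that for every candidate fact s = (r, e_1, ..., e_n), the S2S score f_z(𝐫, 𝐞_1,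 ..., 𝐞_n; Z^n) computed on the first n segments equals 1 if s ∈ S and 0 if s ∉ S. -/
open Finset

theorem tucker_diag_aux (n q : ℕ) (v : ℝ) (u : Fin (n + 1) → Fin q → ℝ) :
    tucker n q (diagT n q v) u = v * ∑ k : Fin q, ∏ i : Fin (n + 1), u i k := by
  unfold tucker diagT
  rw [Finset.mul_sum]
  symm
  apply Finset.sum_of_injOn (fun (k : Fin q) => (fun _ : Fin (n + 1) => k))
  · intro a _ b _ h
    exact congrFun h 0
  · intro a _
    simp
  · intro k _ hk
    have : ¬ ∀ i, k i = k 0 := by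
      intro h
      apply hk
      refine ⟨k 0, by simp, ?_⟩
      funext i
      exact (h i).symm
    rw [if_neg this, zero_mul]
  · intro k _
    simp

/-- expressiveness of S2S at a fixed arity `n ≥ 2`: for any finite set `S`
of `n`-ary facts over finite entity and relation sets there exist a number of segments
`M ≥ n`, a segment dimension `q ≥ 1`, a single shared embedding per entity and per
relation in `ℝ^(M·q)`, and a sparse core tensor `Z` with `m = min(n, M) = n` segments
(every block in `{-I_1^n, I_0^n, I_1^n}`) such that the S2S score computed on the first
`n` segments is `1` on facts in `S` and `0` on all other candidate facts. -/
theorem s2s_expressive_fixed_arity {E R : Type*}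
    [Fintype E] [Fintype R] [DecidableEq E] [DecidableEq R]
    (n : ℕ) (hn : 2 ≤ n)
    (S : Finset (R × (Fin n → E))) :
    ∃ (M q : ℕ) (hM : n ≤ M) (_hq : 1 ≤ q)
      (Eemb : E → Fin (M * q) → ℝ) (Remb : R → Fin (M * q) → ℝ)
      (Z : (Fin (n + 1) → Fin n) → (Fin (n + 1) → Fin q) → ℝ),
      SparseCore n n q Z ∧
      ∀ (r : R) (e : Fin n → E),
        s2sScoreFirst n n M q hM Z
            (Fin.cases (Remb r) (fun i => Eemb (e i)))
          = if (r, e) ∈ S then 1 else 0 := by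
  classical
  have hn0 : 0 < n := by omega
  let g : Fin (Fintype.card (Option S)) ≃ Option S := (Fintype.equivFin (Option S)).symm
  let js : Fin (n + 1) → Fin n := Fin.cases ⟨0, hn0⟩ (fun i => i)
  refine ⟨n, Fintype.card (Option S), le_refl n, Fintype.card_pos,
    fun e x => (g (finProdFinEquiv.symm x).2).elim 0
      (fun s => if s.1.2 (finProdFinEquiv.symm x).1 = e then 1 else 0),
    fun r x => (g (finProdFinEquiv.symm x).2).elim 0
      (fun s => if s.1.1 = r then 1 else 0),
    fun j => diagT n _ (if j = js then 1 else 0), ?_, ?_⟩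
  · intro j
    by_cases h : j = js
    · right; right; simp [h]
    · right; left; simp [h]
  · intro r e
    unfold s2sScoreFirst
    simp only [tucker_diag_aux, ite_mul, one_mul, zero_mul, Finset.sum_ite_eq',
      Finset.sum_ite_eq, Finset.mem_univ, if_true]
    simp only [Fin.prod_univ_succ, seg, Fin.cases_zero, Fin.cases_succ, js,
      Equiv.symm_apply_apply, Fin.castLE_refl]
    rw [Equiv.sum_comp g (fun o => (o.elim 0 (fun s => if s.1.1 = r then (1:ℝ) else 0)) *
      ∏ i : Fin n, (o.elim 0 (fun s => if s.1.2 i = e i then (1:ℝ) else 0)))]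
    rw [Fintype.sum_option]
    simp only [Option.elim_none, Option.elim_some, zero_mul, zero_add]
    have h1 : ∀ s : S, (if s.1.1 = r then (1:ℝ) else 0) *
        ∏ i : Fin n, (if s.1.2 i = e i then (1:ℝ) else 0) = if s.1 = (r, e) then 1 else 0 := by
      intro s
      rw [Finset.prod_ite_zero]
      simp [Prod.ext_iff, funext_iff, ite_and]
      split_ifs <;> rfl
    rw [Finset.sum_congr rfl (fun s _ => h1 s)]
    rw [Finset.sum_coe_sort S (fun s => if s = (r, e) then (1:ℝ) else 0)]
    rw [Finset.sum_ite_eq']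
end

section
/- Fix an arity n ≥ 2. Let E and R be finite sets of entities and relations and let S be a finite set of n-ary facts, each fact being a tuple (r, e_1, ..., e_n) with r ∈ R and e_1, ..., e_n ∈ E. Set d = |S|. Then there exist a relation embedding map R_emb: R → ℝ^d and, for each argument position i ∈ {1, ..., n}, a position-specific entity embedding map E_i: E → ℝ^d (i.e., a CP decomposition with one factor matrix per mode) such that for every candidate fact s = (r, e_1, ..., e_n), the CP score ⟨R_emb(r), E_1(e_1), ..., E_n(e_n)⟩ equals 1 if s ∈ S and equals 0 if s ∉ S. In particular, d = |S| dimensions suffice for a CP model to accurately represent the ground truth of any n-ary relational data. -/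
open Finset

/-- for any finite set `S` of `n`-ary facts over finite entity and relation
sets, there is a CP decomposition with `d = |S|` dimensions — a relation embedding map and
one position-specific entity embedding map per argument position — whose CP score is `1`
on facts in `S` and `0` on all other candidate facts. -/
theorem cp_expressive {E R : Type*} [Fintype E] [Fintype R] [DecidableEq E] [DecidableEq R]
    (n : ℕ) (hn : 2 ≤ n)
    (S : Finset (R × (Fin n → E))) :
    ∃ (Remb : R → Fin S.card → ℝ) (Eemb : Fin n → E → Fin S.card → ℝ),
      ∀ (r : R) (e : Fin n → E),
        mip (n := n) (q := S.card) (Fin.cases (Remb r) (fun i => Eemb i (e i)))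
          = if (r, e) ∈ S then 1 else 0 := by
  let f := S.equivFin.symm
  refine ⟨fun r k => if (f k).1.1 = r then 1 else 0,
    fun i x k => if (f k).1.2 i = x then 1 else 0, fun r e => ?_⟩
  have key : ∀ k : Fin S.card,
      (∏ i : Fin (n + 1), (Fin.cases (motive := fun _ => Fin S.card → ℝ)
        (fun k => if (f k).1.1 = r then (1 : ℝ) else 0)
        (fun i k => if (f k).1.2 i = e i then (1 : ℝ) else 0) i : Fin S.card → ℝ) k)
      = if (f k).1 = (r, e) then 1 else 0 := by
    intro k
    rw [Fin.prod_univ_succ]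
    simp only [Fin.cases_zero, Fin.cases_succ]
    rw [Finset.prod_ite_zero]
    simp only [Finset.mem_univ, true_implies, Finset.prod_const_one, Prod.ext_iff, funext_iff]
    by_cases h1 : (f k).1.1 = r <;> simp [h1]
  unfold mip
  refine (Finset.sum_congr rfl fun k _ => key k).trans ?_
  rw [Equiv.sum_comp f (fun s : S => if s.1 = (r, e) then (1 : ℝ) else 0),
    Finset.sum_coe_sort S (fun s => if s = (r, e) then (1 : ℝ) else 0)]
  simp
end

section
/- Fix an arity n ≥ 2 and let s_1, ..., s_K be a finite list of n-ary facts over finite entity set E and relation set R, where s_k = (r_k, e_{k,1}, ..., e_{k,n}). Define indicator embeddings in ℝ^K by: for r ∈ R, (R_emb(r))_k = 1 if r = r_k and 0 otherwise; and for each position i ∈ {1, ..., n} and e ∈ E, (E_i(e))_k = 1 if e = e_{k,i} and 0 otherwise. Then for every candidate fact s = (r, e_1, ..., e_n), the CP score ⟨R_emb(r), E_1(e_1), ..., E_n(e_n)⟩ equals the number of indices k ∈ {1, ..., K} with s_k = s. -/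
open Finset

/-- with the indicator embeddings in `ℝ^K` built from the list of facts
`s_1, …, s_K` (relation indicator, and one position-specific entity indicator per
argument position), the CP score of any candidate fact `(r, e_1, …, e_n)` equals the
number of indices `k` with `s_k = (r, e_1, …, e_n)`. -/
theorem cp_indicator_embeddings_count {E R : Type*} [DecidableEq E] [DecidableEq R]
    (n K : ℕ) (hn : 2 ≤ n)
    (facts : Fin K → R × (Fin n → E))
    (Remb : R → Fin K → ℝ) (Eemb : Fin n → E → Fin K → ℝ)
    (hRemb : ∀ (r : R) (k : Fin K), Remb r k = if r = (facts k).1 then 1 else 0)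
    (hEemb : ∀ (i : Fin n) (e : E) (k : Fin K),
      Eemb i e k = if e = (facts k).2 i then 1 else 0) :
    ∀ (r : R) (e : Fin n → E),
      mip (n := n) (q := K) (Fin.cases (Remb r) (fun i => Eemb i (e i)))
        = ((Finset.univ.filter fun k : Fin K => facts k = (r, e)).card : ℝ) := by
  intro r e
  unfold mip
  rw [Finset.card_filter]
  push_cast
  refine Finset.sum_congr rfl fun k _ => ?_
  rw [Fin.prod_univ_succ]
  simp only [Fin.cases_zero, Fin.cases_succ, hRemb, hEemb]
  by_cases h : facts k = (r, e)
  · simp [h]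
  · rw [if_neg h]
    by_cases hr : r = (facts k).1
    · have : ∃ i, e i ≠ (facts k).2 i := by
        by_contra! hc
        exact h (Prod.ext hr.symm (funext fun i => (hc i).symm))
      obtain ⟨i, hi⟩ := this
      rw [Finset.prod_eq_zero (Finset.mem_univ i) (if_neg hi), mul_zero]
    · rw [if_neg hr, zero_mul]
end

section
/- Fix n ≥ 2, m ≥ 1, and q ≥ 1. Let Z be the S2S core tensor for arity n with m segments of size q whose block Z_{j_0,...,j_n} equals I_1^n when j_0 = j_1 = ⋯ = j_n and equals I_0^n (the zero tensor) otherwise. Then for all vectors r, e_1, ..., e_n ∈ ℝ^{mq}, the S2S score satisfies f_z(r, e_1, ..., e_n; Z) = ⟨r, e_1, ..., e_n⟩, i.e., the n-CP scoring function is a special case of the S2S sparse core tensor scoring function. -/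
open Finset

theorem sum_diag_aux (n p : ℕ) (F : (Fin (n + 1) → Fin p) → ℝ) :
    (∑ k : Fin (n + 1) → Fin p, if ∀ i, k i = k 0 then F k else 0)
      = ∑ a : Fin p, F (fun _ => a) := by
  rw [← Finset.sum_filter]
  symm
  refine Finset.sum_bij (fun a _ => fun _ => a) ?_ ?_ ?_ ?_
  · intro a _
    simp
  · intro a _ b _ h
    exact congrFun h 0
  · intro k hk
    refine ⟨k 0, Finset.mem_univ _, ?_⟩
    funext i
    exact ((Finset.mem_filter.mp hk).2 i).symm
  · intro a _
    rfl

/-- the S2S core tensor whose block `Z_{j_0,…,j_n}` is `I_1^n` when all the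
`j_i` coincide and `I_0^n` otherwise recovers the n-CP scoring function: its S2S score
equals the multilinear inner product of the full vectors in `ℝ^(m·q)`. -/
theorem nCP_special_case_of_s2s (n m q : ℕ) (hn : 2 ≤ n) (hm : 1 ≤ m) (hq : 1 ≤ q)
    (Z : (Fin (n + 1) → Fin m) → (Fin (n + 1) → Fin q) → ℝ)
    (hZ : ∀ j, Z j = if (∀ i, j i = j 0) then diagT n q 1 else diagT n q 0)
    (vs : Fin (n + 1) → Fin (m * q) → ℝ) :
    s2sScore n m q Z vs = mip n (m * q) vs := by
  have key : ∀ j : Fin (n + 1) → Fin m,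
      tucker n q (Z j) (fun i => seg m q (vs i) (j i))
        = if ∀ i, j i = j 0 then
            ∑ a : Fin q, ∏ i : Fin (n + 1), vs i (finProdFinEquiv (j i, a)) else 0 := by
    intro j
    rw [hZ j]
    split_ifs with h
    · simp only [tucker, diagT, seg, ite_mul, one_mul, zero_mul]
      exact sum_diag_aux n q
        (fun k => ∏ i : Fin (n + 1), vs i (finProdFinEquiv (j i, k i)))
    · simp [tucker, diagT]
  unfold s2sScore mip
  rw [Finset.sum_congr rfl (fun j _ => key j), sum_diag_aux n m
    (fun j => ∑ a : Fin q, ∏ i : Fin (n + 1), vs i (finProdFinEquiv (j i, a))),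
    ← finProdFinEquiv.sum_comp, Fintype.sum_prod_type]
end

section
/- Fix q ≥ 1. For all complex vectors r, u, w ∈ ℂ^q, the ComplEx score satisfies Re(Σ_{k=1}^q r_k u_k conj(w_k)) = ⟨Re r, Re u, Re w⟩ + ⟨Re r, Im u, Im w⟩ + ⟨Im r, Re u, Im w⟩ − ⟨Im r, Im u, Re w⟩, where Re and Im are taken coordinatewise. Consequently, identifying each complex vector x ∈ ℂ^q with the real vector [Re x; Im x] ∈ ℝ^{2q} with 2 segments of length q, the ComplEx scoring function equals the S2S binary score f_z with m = 2 segments for the core tensor Z whose blocks are Z_{1,1,1} = I_1^2, Z_{1,2,2} = I_1^2, Z_{2,1,2} = I_1^2, Z_{2,2,1} = −I_1^2, and all other blocks zero. -/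
open Finset

/-- Identify a complex vector `x ∈ ℂ^q` with the real vector `[Re x; Im x] ∈ ℝ^(2·q)`
with 2 segments of length `q`: segment 1 is the real part, segment 2 the imaginary part. -/
def realify (q : ℕ) (x : Fin q → ℂ) : Fin (2 * q) → ℝ :=
  fun idx =>
    if (finProdFinEquiv.symm idx).1 = (0 : Fin 2) then (x (finProdFinEquiv.symm idx).2).re
    else (x (finProdFinEquiv.symm idx).2).im

theorem tucker_diagT (n q : ℕ) (c : ℝ) (u : Fin (n + 1) → Fin q → ℝ) :
    tucker n q (diagT n q c) u = c * mip n q u := by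
  unfold tucker diagT mip
  simp only [ite_mul, zero_mul]
  rw [← Finset.sum_filter, Finset.mul_sum]
  symm
  refine Finset.sum_bij (fun (a : Fin q) _ => fun _ : Fin (n + 1) => a) ?_ ?_ ?_ ?_
  · intro a _; simp
  · intro a _ b _ h; exact congrFun h 0
  · intro k hk
    simp only [Finset.mem_filter, Finset.mem_univ, true_and] at hk
    exact ⟨k 0, Finset.mem_univ _, by funext i; exact (hk i).symm⟩
  · intro a _; rfl

theorem sum_cube (f : (Fin 3 → Fin 2) → ℝ) :
    ∑ j, f j = f ![0,0,0] + f ![0,0,1] + f ![0,1,0] + f ![0,1,1]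
      + f ![1,0,0] + f ![1,0,1] + f ![1,1,0] + f ![1,1,1] := by
  have h : (Finset.univ : Finset (Fin 3 → Fin 2)) =
    {![0,0,0], ![0,0,1], ![0,1,0], ![0,1,1], ![1,0,0], ![1,0,1], ![1,1,0], ![1,1,1]} := by
    decide
  rw [h]
  repeat rw [Finset.sum_insert (by decide)]
  rw [Finset.sum_singleton]
  ring

theorem seg_realify_zero (q : ℕ) (x : Fin q → ℂ) :
    seg 2 q (realify q x) 0 = fun k => (x k).re := by
  funext k
  simp only [seg, realify, Equiv.symm_apply_apply, if_true]

theorem seg_realify_one (q : ℕ) (x : Fin q → ℂ) :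
    seg 2 q (realify q x) 1 = fun k => (x k).im := by
  funext k
  simp only [seg, realify, Equiv.symm_apply_apply]
  rw [if_neg (by decide)]

/-- the ComplEx score `Re(Σ_k r_k u_k conj(w_k))` decomposes into four
multilinear inner products of the coordinatewise real and imaginary parts, and — under
the identification `x ↦ [Re x; Im x] ∈ ℝ^(2q)` — it equals the S2S binary score with
`m = 2` segments for the sparse core tensor with blocks `Z_{1,1,1} = I_1^2`,
`Z_{1,2,2} = I_1^2`, `Z_{2,1,2} = I_1^2`, `Z_{2,2,1} = -I_1^2` and all other blocks zero
(1-based block indices). -/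
theorem complEx_as_s2s (q : ℕ) (hq : 1 ≤ q) (r u w : Fin q → ℂ)
    (Z : (Fin 3 → Fin 2) → (Fin 3 → Fin q) → ℝ)
    (hZ : ∀ j, Z j = diagT 2 q
      (if j = ![0, 0, 0] then 1
       else if j = ![0, 1, 1] then 1
       else if j = ![1, 0, 1] then 1
       else if j = ![1, 1, 0] then -1
       else 0)) :
    (∑ k : Fin q, r k * u k * (starRingEnd ℂ) (w k)).re
        = mip 2 q ![fun k => (r k).re, fun k => (u k).re, fun k => (w k).re]
          + mip 2 q ![fun k => (r k).re, fun k => (u k).im, fun k => (w k).im]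
          + mip 2 q ![fun k => (r k).im, fun k => (u k).re, fun k => (w k).im]
          - mip 2 q ![fun k => (r k).im, fun k => (u k).im, fun k => (w k).re]
    ∧ (∑ k : Fin q, r k * u k * (starRingEnd ℂ) (w k)).re
        = s2sScore 2 2 q Z ![realify q r, realify q u, realify q w] := by
  have h1 : (∑ k : Fin q, r k * u k * (starRingEnd ℂ) (w k)).re
        = mip 2 q ![fun k => (r k).re, fun k => (u k).re, fun k => (w k).re]
          + mip 2 q ![fun k => (r k).re, fun k => (u k).im, fun k => (w k).im]
          + mip 2 q ![fun k => (r k).im, fun k => (u k).re, fun k => (w k).im]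
          - mip 2 q ![fun k => (r k).im, fun k => (u k).im, fun k => (w k).re] := by
    unfold mip
    rw [Complex.re_sum, ← Finset.sum_add_distrib, ← Finset.sum_add_distrib,
      ← Finset.sum_sub_distrib]
    refine Finset.sum_congr rfl fun k _ => ?_
    simp [Fin.prod_univ_three]
    ring
  refine ⟨h1, ?_⟩
  rw [h1]
  unfold s2sScore
  simp only [hZ, tucker_diagT]
  rw [sum_cube]
  simp [mip, Fin.prod_univ_three, seg_realify_zero, seg_realify_one]
  ring
end

section
/- Fix q ≥ 1. Let G ∈ ℝ^{2q × 2q × 2q} be the 3-order tensor with entries G_{k, k, q+k} = 1/2 and G_{q+k, q+k, k} = 1/2 for every k ∈ {1, ..., q}, and all other entries zero. Then for all vectors v, w, h_1, t_1, h_2, t_2 ∈ ℝ^q, setting r = [v; w], e_1 = [h_1; t_1], e_2 = [h_2; t_2] ∈ ℝ^{2q}, the Tucker product satisfies G ×_1 r ×_2 e_1 ×_3 e_2 = (1/2)·Σ_{k=1}^q (v_k (h_1)_k (t_2)_k + w_k (t_1)_k (h_2)_k), which is exactly the SimplE scoring function of the triple. Hence SimplE is a sparse special case of the Tucker core tensor.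 -/
open Finset

/-- the 3-order core tensor `G ∈ ℝ^{2q×2q×2q}` with entries
`G_{k,k,q+k} = 1/2` and `G_{q+k,q+k,k} = 1/2` (for `k ∈ {1,…,q}`) and all other entries
zero recovers the SimplE scoring function: for `r = [v; w]`, `e_1 = [h_1; t_1]`,
`e_2 = [h_2; t_2]`, the Tucker product `G ×_1 r ×_2 e_1 ×_3 e_2` equals
`(1/2) Σ_k (v_k (h_1)_k (t_2)_k + w_k (t_1)_k (h_2)_k)`. Hence SimplE is a sparse special
case of the Tucker core tensor. -/
theorem simplE_as_sparse_tucker (q : ℕ) (hq : 1 ≤ q)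
    (G : (Fin 3 → Fin (q + q)) → ℝ)
    (hG : ∀ k : Fin 3 → Fin (q + q),
      G k = if ∃ t : Fin q, k = ![Fin.castAdd q t, Fin.castAdd q t, Fin.natAdd q t]
        then 1 / 2
        else if ∃ t : Fin q, k = ![Fin.natAdd q t, Fin.natAdd q t, Fin.castAdd q t]
          then 1 / 2 else 0)
    (v w h₁ t₁ h₂ t₂ : Fin q → ℝ) :
    tucker 2 (q + q) G ![Fin.append v w, Fin.append h₁ t₁, Fin.append h₂ t₂]
      = (1 / 2) * ∑ k : Fin q, (v k * h₁ k * t₂ k + w k * t₁ k * h₂ k) := by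
  have key : ∀ k, G k
      = (∑ t : Fin q, if k = ![Fin.castAdd q t, Fin.castAdd q t, Fin.natAdd q t]
          then (1 / 2 : ℝ) else 0)
        + ∑ t : Fin q, if k = ![Fin.natAdd q t, Fin.natAdd q t, Fin.castAdd q t]
          then (1 / 2 : ℝ) else 0 := by
    intro k
    rw [hG]
    split_ifs with h h'
    · obtain ⟨s, rfl⟩ := h
      rw [Finset.sum_eq_single s, Finset.sum_eq_zero]
      · simp
      · intro t _
        rw [if_neg]
        intro h
        have := congrArg Fin.val (congrFun h 0)
        simp at this
        omega
      · intro t _ hne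
        rw [if_neg]
        intro h
        have := congrArg Fin.val (congrFun h 0)
        simp at this
        omega
      · simp
    · obtain ⟨s, rfl⟩ := h'
      rw [Finset.sum_eq_zero, Finset.sum_eq_single s]
      · simp
      · intro t _ hne
        rw [if_neg]
        intro h
        have := congrArg Fin.val (congrFun h 0)
        simp at this
        omega
      · simp
      · intro t _
        rw [if_neg]
        exact fun e => h ⟨t, e⟩
    · rw [Finset.sum_eq_zero, Finset.sum_eq_zero]
      · simp
      · intro t _
        rw [if_neg]
        exact fun e => h' ⟨t, e⟩
      · intro t _
        rw [if_neg]
        exact fun e => h ⟨t, e⟩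
  unfold tucker
  simp only [key, add_mul, Finset.sum_mul, Finset.sum_add_distrib]
  rw [Finset.sum_comm]
  rw [Finset.sum_comm (s := (Finset.univ : Finset (Fin 3 → Fin (q + q))))]
  simp only [ite_mul, zero_mul, Finset.sum_ite_eq', Finset.sum_ite_eq, Finset.mem_univ, if_true]
  rw [mul_add, Finset.mul_sum, Finset.mul_sum]
  simp [Fin.prod_univ_three, -Fin.natAdd_eq_addNat]
end

section
/- Fix M ≥ 1 and q ≥ 1. Let g be any AutoSF-style block assignment: for each pair (i, j) ∈ {1,...,M}², g assigns either zero or a signed relation-segment index (s_{ij}, k_{ij}) with s_{ij} ∈ {−1, 1} and k_{ij} ∈ {1,...,M}, and the resulting bilinear scoring function of vectors r, h, t ∈ ℝ^{Mq} (partitioned into M segments of length q) is f(h, r, t) = Σ_{(i,j) assigned} s_{ij} · ⟨r^{(k_{ij})}, h^{(i)}, t^{(j)}⟩. Then f equals the S2S binary score f_z(r, h, t; Z) for the sparse core tensor Z with m = M segments whose block Z_{k_{ij}, i, j} = s_{ij} · I_1^2 for each assigned pair (i, j) and whose remaining blocks are I_0^2. In particular, every scoring function in the AutoSF search space lies in the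 S2S binary search space. -/
open Finset

theorem aux_sum3 {α : Type*} [Fintype α] [DecidableEq α] (F : (Fin 3 → α) → ℝ) :
    ∑ f : Fin 3 → α, F f = ∑ b : α, ∑ c : α, ∑ a : α, F ![a, b, c] := by
  have h : ∑ f : Fin 3 → α, F f = ∑ p : α × α × α, F ![p.2.2, p.1, p.2.1] := by
    refine Finset.sum_bij' (fun f _ => (f 1, f 2, f 0)) (fun p _ => ![p.2.2, p.1, p.2.1])
      (by simp) (by simp) ?_ ?_ ?_
    · intro f _; funext i; fin_cases i <;> rfl
    · rintro ⟨a, b, c⟩ _; rfl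
    · intro f _; congr 1; funext i; fin_cases i <;> rfl
  rw [h, Fintype.sum_prod_type]
  refine Finset.sum_congr rfl fun b _ => ?_
  rw [Fintype.sum_prod_type]

theorem aux_tucker (q : ℕ) (s : ℝ) (u : Fin 3 → Fin q → ℝ) :
    tucker 2 q (diagT 2 q s) u = s * mip 2 q u := by
  unfold tucker mip diagT
  rw [aux_sum3, Finset.mul_sum]
  refine Finset.sum_congr rfl fun b _ => ?_
  rw [Finset.sum_eq_single b, Finset.sum_eq_single b]
  · simp [Fin.forall_fin_succ, Fin.prod_univ_succ]
  · intro a _ hab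
    rw [if_neg, zero_mul]
    intro h
    exact hab (h 1).symm
  · simp
  · intro c _ hcb
    refine Finset.sum_eq_zero fun a _ => ?_
    rw [if_neg, zero_mul]
    intro h
    exact hcb ((h 2).trans (h 1).symm)
  · simp

/-- every AutoSF-style bilinear scoring function lies in the S2S binary
search space. The assignment `g` maps each pair of entity-segment positions `(i, j)`
either to nothing (zero) or to a signed relation-segment index `(s, k)` with
`s ∈ {-1, 1}`; the induced scoring function is
`f(h, r, t) = Σ_{(i,j) assigned} s_{ij} ⟨r^(k_{ij}), h^(i), t^(j)⟩`. The core tensor `Z`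
with block `Z_{k_{ij}, i, j} = s_{ij}·I_1^2` for each assigned pair and `I_0^2` elsewhere
is sparse, and its S2S binary score equals `f`. -/
theorem autoSF_in_s2s_search_space (M q : ℕ) (hM : 1 ≤ M) (hq : 1 ≤ q)
    (g : Fin M → Fin M → Option (ℝ × Fin M))
    (hg : ∀ (i j : Fin M) (s : ℝ) (k : Fin M), g i j = some (s, k) → s = 1 ∨ s = -1)
    (Z : (Fin 3 → Fin M) → (Fin 3 → Fin q) → ℝ)
    (hZ : ∀ jidx : Fin 3 → Fin M, Z jidx =
      match g (jidx 1) (jidx 2) with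
      | some (s, k) => if jidx 0 = k then diagT 2 q s else diagT 2 q 0
      | none => diagT 2 q 0) :
    SparseCore 2 M q Z ∧
    ∀ r h t : Fin (M * q) → ℝ,
      s2sScore 2 M q Z ![r, h, t]
        = ∑ i : Fin M, ∑ j : Fin M,
            (match g i j with
             | some (s, k) => s * mip 2 q ![seg M q r k, seg M q h i, seg M q t j]
             | none => 0) := by
  constructor
  · intro x
    rw [hZ x]
    rcases hgx : g (x 1) (x 2) with _ | ⟨s, k⟩
    · exact Or.inr (Or.inl rfl)
    · by_cases hk : x 0 = k
      · rcases hg _ _ _ _ hgx with rfl | rfl <;> simp [hk]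
      · simp [hk]
  · intro r h t
    unfold s2sScore
    rw [aux_sum3]
    refine Finset.sum_congr rfl fun i _ => Finset.sum_congr rfl fun j _ => ?_
    have key : ∀ a : Fin M, Z ![a, i, j] =
        match g i j with
        | some (s, k) => if a = k then diagT 2 q s else diagT 2 q 0
        | none => diagT 2 q 0 := fun a => hZ ![a, i, j]
    simp only [key]
    rcases hgx : g i j with _ | ⟨s, k⟩
    · simp [aux_tucker]
    · rw [Finset.sum_eq_single k]
      · simp only [if_true, aux_tucker]
        congr 2
        funext x
        fin_cases x <;> rfl
      · intro a _ hak
        simp [hak, aux_tucker]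
      · simp
end
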